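/- Fix a real number g > 0, real constant matrices B (n×m), C (p×n), D (p×m), a continuous matrix-valued function A : ℝ → ℝ^{n×n}, and a differentiable symmetric-matrix-valued function P : ℝ → ℝ^{n×n} with derivative P′ such that P(t) is positive semidefinite for every t. Let β : ℝ → ℝᵐ be continuous and let x : ℝ → ℝⁿ be differentiable with x′(t) = A(t)x(t) + Bβ(t) for all t and x(0) = 0, and define z(t) := Cx(t) + Dβ(t). Suppose there exists ε > 0 such that for every t ∈ [0, T] the (n+m)×(n+m) symmetric block matrix with blocks [P′(t) + A(t)ᵀP(t) + P(t)A(t) + CᵀC + εI, CᵀD + P(t)B; BᵀP(t) + DᵀC, DᵀD − g²I + εI] is negative semidefinite. Then ∫₀ᵀ (‖z(t)‖² + ε‖x(t)‖² + ε‖β(t)‖²) dt ≤ g² ∫₀ᵀ ‖β(t)‖² dt. -/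

import Mathlib

open Matrix

/-! Along the trajectory, the quadratic form of the block matrix at `(x t, β t)` is the rate of the
storage function `xᵀPx` minus the supply rate `g²‖β‖² - ‖z‖² - ε‖x‖² - ε‖β‖²`. The matrix inequality
therefore says that the storage function grows no faster than the supply rate; integrating this and
using `x 0 = 0` and `0 ≤ P T` gives the gain bound. -/

section Deriv

variable {𝕜 𝔸 m n : Type*} [NontriviallyNormedField 𝕜] [NormedRing 𝔸] [NormedAlgebra 𝕜 𝔸]
  [Fintype n] {s : Set 𝕜} {t : 𝕜}

theorem hasDerivWithinAt_dotProduct {u v : 𝕜 → n → 𝔸} {u' v' : n → 𝔸}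
    (hu : HasDerivWithinAt u u' s t) (hv : HasDerivWithinAt v v' s t) :
    HasDerivWithinAt (fun r => u r ⬝ᵥ v r) (u' ⬝ᵥ v t + u t ⬝ᵥ v') s t := by
  simpa only [dotProduct, Finset.sum_add_distrib] using
    HasDerivWithinAt.fun_sum fun i (_ : i ∈ Finset.univ) =>
      (hasDerivWithinAt_pi.1 hu i).fun_mul (hasDerivWithinAt_pi.1 hv i)

theorem hasDerivWithinAt_mulVec [Finite m] {M : 𝕜 → Matrix m n 𝔸} {M' : Matrix m n 𝔸}
    {v : 𝕜 → n → 𝔸} {v' : n → 𝔸}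
    (hM : ∀ i j, HasDerivWithinAt (fun r => M r i j) (M' i j) s t)
    (hv : HasDerivWithinAt v v' s t) :
    HasDerivWithinAt (fun r => M r *ᵥ v r) (M' *ᵥ v t + M t *ᵥ v') s t := by
  have := Fintype.ofFinite m
  exact hasDerivWithinAt_pi.2 fun i =>
    hasDerivWithinAt_dotProduct (hasDerivWithinAt_pi.2 (hM i)) hv

theorem hasDerivWithinAt_dotProduct_mulVec {M : 𝕜 → Matrix n n 𝔸} {M' : Matrix n n 𝔸}
    {v : 𝕜 → n → 𝔸} {v' : n → 𝔸}
    (hM : ∀ i j, HasDerivWithinAt (fun r => M r i j) (M' i j) s t)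
    (hv : HasDerivWithinAt v v' s t) :
    HasDerivWithinAt (fun r => v r ⬝ᵥ M r *ᵥ v r)
      (v' ⬝ᵥ M t *ᵥ v t + v t ⬝ᵥ (M' *ᵥ v t + M t *ᵥ v')) s t :=
  hasDerivWithinAt_dotProduct hv (hasDerivWithinAt_mulVec hM hv)

end Deriv

theorem continuousOn_dotProduct_mulVec {X R m n : Type*} [TopologicalSpace X] [TopologicalSpace R]
    [NonUnitalNonAssocSemiring R] [ContinuousAdd R] [ContinuousMul R] [Fintype m] [Fintype n]
    {s : Set X} {u : X → m → R} {M : X → Matrix m n R} {v : X → n → R}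
    (hu : ContinuousOn u s) (hM : ContinuousOn M s) (hv : ContinuousOn v s) :
    ContinuousOn (fun r => u r ⬝ᵥ M r *ᵥ v r) s := by
  rw [continuousOn_iff_continuous_domRestrict] at hu hM hv ⊢
  exact hu.dotProduct (hM.matrix_mulVec hv)

theorem sum_sq_eq_dotProduct_self {n R : Type*} [Fintype n] [Semiring R] (v : n → R) :
    ∑ i, v i ^ 2 = v ⬝ᵥ v := by
  simp only [dotProduct, pow_two]

theorem dotProduct_transpose_mulVec_eq_mulVec_dotProduct {m n R : Type*} [Fintype m] [Fintype n]
    [CommSemiring R] (M : Matrix m n R) (v : n → R) (w : m → R) :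
    v ⬝ᵥ Mᵀ *ᵥ w = M *ᵥ v ⬝ᵥ w := by
  rw [dotProduct_transpose_mulVec, dotProduct_comm]

section BoundedReal

open MeasureTheory Set

variable {n m p : Type*} [Fintype n] [Fintype m] [Fintype p] [DecidableEq n] [DecidableEq m]

/-- The block matrix of the bounded real lemma with attenuation level `g` and margin `ε`, for the
system `x' = Ax + Bw`, `z = Cx + Dw` and the storage function `xᵀPx`; the matrix `P'` stands for the
time derivative of `P`. The blocks are those of a symmetric matrix only when `P` and `P'` are
symmetric. -/
def boundedRealMatrix {R : Type*} [CommRing R] (A : Matrix n n R) (B : Matrix n m R)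
    (C : Matrix p n R) (D : Matrix p m R) (P P' : Matrix n n R) (g ε : R) :
    Matrix (n ⊕ m) (n ⊕ m) R :=
  fromBlocks (P' + Aᵀ * P + P * A + Cᵀ * C + ε • (1 : Matrix n n R)) (Cᵀ * D + P * B)
    (Bᵀ * P + Dᵀ * C) (Dᵀ * D - g ^ 2 • (1 : Matrix m m R) + ε • (1 : Matrix m m R))

theorem dotProduct_boundedRealMatrix_mulVec {R : Type*} [CommRing R] (A : Matrix n n R)
    (B : Matrix n m R) (C : Matrix p n R) (D : Matrix p m R) (P P' : Matrix n n R) (g ε : R)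
    (x : n → R) (w : m → R) :
    Sum.elim x w ⬝ᵥ boundedRealMatrix A B C D P P' g ε *ᵥ Sum.elim x w =
      ((A *ᵥ x + B *ᵥ w) ⬝ᵥ P *ᵥ x + x ⬝ᵥ (P' *ᵥ x + P *ᵥ (A *ᵥ x + B *ᵥ w))) -
        (g ^ 2 * ∑ i, w i ^ 2 -
          (∑ i, (C *ᵥ x + D *ᵥ w) i ^ 2 + ε * ∑ i, x i ^ 2 + ε * ∑ i, w i ^ 2)) := by
  rw [boundedRealMatrix, fromBlocks_mulVec, sumElim_dotProduct_sumElim]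
  simp only [Sum.elim_comp_inl, Sum.elim_comp_inr, add_mulVec, sub_mulVec, smul_mulVec, one_mulVec,
    ← mulVec_mulVec, mulVec_add, add_dotProduct, dotProduct_add, dotProduct_sub, dotProduct_smul,
    smul_eq_mul, dotProduct_transpose_mulVec_eq_mulVec_dotProduct, sum_sq_eq_dotProduct_self]
  ring

theorem stmt5_general {a b g ε : ℝ} {A : ℝ → Matrix n n ℝ} {B : ℝ → Matrix n m ℝ}
    {C : ℝ → Matrix p n ℝ} {D : ℝ → Matrix p m ℝ} {P P' : ℝ → Matrix n n ℝ}
    {β : ℝ → m → ℝ} {x : ℝ → n → ℝ} {z : ℝ → p → ℝ} (hab : a ≤ b)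
    (hPcont : ContinuousOn P (Icc a b))
    (hPderiv : ∀ t ∈ Ioo a b, ∀ i j, HasDerivWithinAt (fun s => P s i j) (P' t i j) (Ioi t) t)
    (hxcont : ContinuousOn x (Icc a b))
    (hx : ∀ t ∈ Ioo a b, HasDerivWithinAt x (A t *ᵥ x t + B t *ᵥ β t) (Ioi t) t)
    (hz : ∀ t ∈ Ioo a b, z t = C t *ᵥ x t + D t *ᵥ β t)
    (hβint : IntervalIntegrable (fun t => ∑ i, β t i ^ 2) volume a b)
    (hzint : IntervalIntegrable (fun t => ∑ i, z t i ^ 2) volume a b)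
    (hLMI : ∀ t ∈ Ioo a b, ∀ v : n ⊕ m → ℝ,
      v ⬝ᵥ boundedRealMatrix (A t) (B t) (C t) (D t) (P t) (P' t) g ε *ᵥ v ≤ 0) :
    x b ⬝ᵥ P b *ᵥ x b +
        ∫ t in a..b, (∑ i, z t i ^ 2 + ε * ∑ i, x t i ^ 2 + ε * ∑ i, β t i ^ 2) ≤
      x a ⬝ᵥ P a *ᵥ x a + g ^ 2 * ∫ t in a..b, ∑ i, β t i ^ 2 := by
  have hxint : IntervalIntegrable (fun t => ∑ i, x t i ^ 2) volume a b :=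
    ContinuousOn.intervalIntegrable_of_Icc hab (by fun_prop)
  have hrate (t : ℝ) (ht : t ∈ Ioo a b) :
      (A t *ᵥ x t + B t *ᵥ β t) ⬝ᵥ P t *ᵥ x t +
          x t ⬝ᵥ (P' t *ᵥ x t + P t *ᵥ (A t *ᵥ x t + B t *ᵥ β t)) ≤
        g ^ 2 * ∑ i, β t i ^ 2 -
          (∑ i, z t i ^ 2 + ε * ∑ i, x t i ^ 2 + ε * ∑ i, β t i ^ 2) := by
    have h := hLMI t ht (Sum.elim (x t) (β t))
    rwa [dotProduct_boundedRealMatrix_mulVec, ← hz t ht, sub_nonpos] at h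
  have hpenalty := (hzint.add (hxint.const_mul ε)).add (hβint.const_mul ε)
  have hsupply := hβint.const_mul (g ^ 2)
  have hdissipation := intervalIntegral.sub_le_integral_of_hasDeriv_right_of_le hab
    (continuousOn_dotProduct_mulVec hxcont hPcont hxcont)
    (fun t ht => hasDerivWithinAt_dotProduct_mulVec (hPderiv t ht) (hx t ht))
    ((intervalIntegrable_iff_integrableOn_Icc_of_le hab).1 (hsupply.sub hpenalty))
    hrate
  rw [intervalIntegral.integral_sub hsupply hpenalty, intervalIntegral.integral_const_mul]
    at hdissipation
  linarith

end BoundedReal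

/-- strict dissipation inequality from zero initial state: the
`L²`-gain bound `g` from the disturbance `β` to the output `z`, given the strict
block LMI (with margin `ε`) on `[0, T]`. -/
theorem stmt5 (n m p : ℕ) (g : ℝ) (hg : 0 < g)
    (B : Matrix (Fin n) (Fin m) ℝ) (C : Matrix (Fin p) (Fin n) ℝ)
    (D : Matrix (Fin p) (Fin m) ℝ)
    (A : ℝ → Matrix (Fin n) (Fin n) ℝ)
    (hAcont : ∀ i j, Continuous fun t => A t i j)
    (P P' : ℝ → Matrix (Fin n) (Fin n) ℝ)
    (hPsymm : ∀ t, (P t)ᵀ = P t)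
    (hPpos : ∀ t, ∀ v : Fin n → ℝ, 0 ≤ v ⬝ᵥ (P t).mulVec v)
    (hPderiv : ∀ t, ∀ i j, HasDerivAt (fun s => P s i j) (P' t i j) t)
    (β : ℝ → Fin m → ℝ) (hβ : Continuous β)
    (x : ℝ → Fin n → ℝ)
    (hx : ∀ t, HasDerivAt x (A t *ᵥ x t + B *ᵥ β t) t)
    (hx0 : x 0 = 0)
    (z : ℝ → Fin p → ℝ) (hz : ∀ t, z t = C *ᵥ x t + D *ᵥ β t)
    (T : ℝ) (hT : 0 ≤ T)
    (ε : ℝ) (hε : 0 < ε)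
    (hLMI : ∀ t ∈ Set.Icc (0 : ℝ) T, ∀ v : Fin n ⊕ Fin m → ℝ,
      v ⬝ᵥ (Matrix.fromBlocks
        (P' t + (A t)ᵀ * P t + P t * A t + Cᵀ * C
            + ε • (1 : Matrix (Fin n) (Fin n) ℝ))
        (Cᵀ * D + P t * B)
        (Bᵀ * P t + Dᵀ * C)
        (Dᵀ * D - g ^ 2 • (1 : Matrix (Fin m) (Fin m) ℝ)
            + ε • (1 : Matrix (Fin m) (Fin m) ℝ))).mulVec v ≤ 0) :
    (∫ t in (0 : ℝ)..T,
        ((∑ i, (z t i) ^ 2) + ε * (∑ i, (x t i) ^ 2) + ε * ∑ i, (β t i) ^ 2))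
      ≤ g ^ 2 * ∫ t in (0 : ℝ)..T, ∑ i, (β t i) ^ 2 := by
  have hxcont : Continuous x := continuous_iff_continuousAt.2 fun t => (hx t).continuousAt
  have hzcont : Continuous z := by
    rw [funext hz]
    exact (continuous_const.matrix_mulVec hxcont).add (continuous_const.matrix_mulVec hβ)
  have hPcont : Continuous P := continuous_matrix fun i j =>
    continuous_iff_continuousAt.2 fun t => (hPderiv t i j).continuousAt
  have h := stmt5_general hT hPcont.continuousOn (fun t _ i j => (hPderiv t i j).hasDerivWithinAt)
    hxcont.continuousOn (fun t _ => (hx t).hasDerivWithinAt) (fun t _ => hz t)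
    (Continuous.intervalIntegrable (by fun_prop) 0 T)
    (Continuous.intervalIntegrable (by fun_prop) 0 T)
    fun t ht => hLMI t (Set.Ioo_subset_Icc_self ht)
  rw [hx0, zero_dotProduct, zero_add] at h
  linarith [hPpos T (x T)]
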